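/- Let R be a commutative unital ring, let u ∈ R satisfy u² = 1, and let a ∈ R. Let M be the 2×2 matrix [[−2, −u], [u, 0]] over R. Then for every natural number k, Mᵏ · (a, u·a)ᵀ = (−1)ᵏ · ((2k+1)·a, −(2k−1)·u·a)ᵀ, where the integer scalars (−1)ᵏ, 2k+1, and 2k−1 act via the canonical ring map ℤ → R. -/

import Mathlib

open Matrix

/-!
The matrix `[[-2, -u⁻¹], [u, 0]]` is minus a unipotent matrix: it equals `-(1 + N)` with
`N = [[1, u⁻¹], [-u, -1]]` and `N * N = 0`. Hence its `k`-th power is `(-1) ^ k (1 + k N)`, which is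
affine in `k` up to sign, and `N` sends `(a, u a)` to `2 (a, -u a)`. If `u ^ 2 = 1`, then `u` is a
unit with `u⁻¹ = u`.
-/

theorem one_add_pow_of_mul_self_eq_zero {R : Type*} [Semiring R] {x : R} (hx : x * x = 0) (k : ℕ) :
    (1 + x) ^ k = 1 + k • x := by
  induction k with
  | zero => simp
  | succ k ih =>
    calc (1 + x) ^ (k + 1) = (1 + k • x) * (1 + x) := by rw [pow_succ, ih]
      _ = 1 + x + k • x + k • (x * x) := by noncomm_ring
      _ = 1 + (k + 1) • x := by rw [hx, smul_zero, add_zero, succ_nsmul', add_assoc]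

section Ring

variable {R : Type*} [Ring R] (u : Rˣ)

/-- The matrix whose powers compute the monodromy iteration, for a unit `u` (in the paper
`u = s₃s₅`) of a ring that need not be commutative. -/
def monodromyMatrix : Matrix (Fin 2) (Fin 2) R :=
  !![-2, -↑u⁻¹; ↑u, 0]

/-- The nilpotent part of the unipotent matrix `-monodromyMatrix u`, that is, its difference from
the identity. It governs the linear growth of the powers of `monodromyMatrix u`. -/
def nilpotentPart : Matrix (Fin 2) (Fin 2) R :=
  !![1, ↑u⁻¹; -↑u, -1]

theorem nilpotentPart_mul_self : nilpotentPart u * nilpotentPart u = 0 := by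
  ext i j
  fin_cases i <;> fin_cases j <;> simp [nilpotentPart]

theorem monodromyMatrix_eq_neg_one_add : monodromyMatrix u = -(1 + nilpotentPart u) := by
  ext i j
  fin_cases i <;> fin_cases j <;> simp [monodromyMatrix, nilpotentPart, one_add_one_eq_two]

theorem monodromyMatrix_pow (k : ℕ) :
    monodromyMatrix u ^ k = (-1 : ℤ) ^ k • (1 + k • nilpotentPart u) := by
  rw [monodromyMatrix_eq_neg_one_add, neg_pow,
    one_add_pow_of_mul_self_eq_zero (nilpotentPart_mul_self u), zsmul_eq_mul, Int.cast_pow,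
    Int.cast_neg, Int.cast_one]

theorem nilpotentPart_mulVec (a : R) :
    nilpotentPart u *ᵥ ![a, u * a] = ![2 * a, -(2 * (u * a))] := by
  ext i
  fin_cases i <;> simp [nilpotentPart, two_mul]

theorem one_add_nsmul_nilpotentPart_mulVec (a : R) (k : ℕ) :
    (1 + k • nilpotentPart u) *ᵥ ![a, u * a] =
      ![((2 * k + 1 : ℤ) : R) * a, -((2 * k - 1 : ℤ) : R) * (u * a)] := by
  have fst_coord : a + k • (2 * a) = ((2 * k + 1 : ℤ) : R) * a := by
    rw [nsmul_eq_mul]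
    push_cast
    noncomm_ring
  have snd_coord : u * a + k • -(2 * (u * a)) = -((2 * k - 1 : ℤ) : R) * (u * a) := by
    rw [nsmul_eq_mul]
    push_cast
    noncomm_ring
  rw [add_mulVec, one_mulVec, smul_mulVec, nilpotentPart_mulVec, smul_vec2, vec2_add, fst_coord,
    snd_coord]

theorem stmt_11_general (a : R) (k : ℕ) :
    (monodromyMatrix u ^ k) *ᵥ ![a, u * a] =
      (((-1 : ℤ) ^ k : ℤ) : R) •
        ![((2 * k + 1 : ℤ) : R) * a, -((2 * k - 1 : ℤ) : R) * (u * a)] := by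
  rw [monodromyMatrix_pow, smul_mulVec, one_add_nsmul_nilpotentPart_mulVec,
    Int.cast_smul_eq_zsmul]

end Ring

/-- Let `R` be a commutative ring, `u ∈ R` with `u² = 1`, and `a ∈ R`. For
`M = [[−2, −u], [u, 0]]` and every `k : ℕ`,
`Mᵏ · (a, u·a)ᵀ = (−1)ᵏ · ((2k+1)·a, −(2k−1)·u·a)ᵀ`, where the integer scalars act via the
canonical ring map `ℤ → R`. -/
theorem stmt_11 (R : Type*) [CommRing R] (u a : R) (hu : u ^ 2 = 1) (k : ℕ) :
    (!![(-2 : R), -u; u, 0] ^ k) *ᵥ ![a, u * a] =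
      (((-1 : ℤ) ^ k : ℤ) : R) •
        ![(((2 * k + 1 : ℤ)) : R) * a, -((((2 * k - 1 : ℤ)) : R)) * (u * a)] := by
  have mul_self : u * u = 1 := by rw [← sq, hu]
  exact stmt_11_general ⟨u, u, mul_self, mul_self⟩ a k
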